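/- If g : ℝ^r → ℝ is G-Lipschitz with ball smoothing g_δ, then the gradient ∇g_δ is (rG/δ)-Lipschitz, i.e. ‖∇g_δ(x) − ∇g_δ(y)‖ ≤ (rG/δ)‖x − y‖ for all x, y. -/

import Mathlib

open MeasureTheory

/-- Ball smoothing operator: average of `g` over a Euclidean ball of radius `δ`. -/
noncomputable def ballSmooth {r : ℕ} (δ : ℝ) (g : EuclideanSpace ℝ (Fin r) → ℝ) :
    EuclideanSpace ℝ (Fin r) → ℝ :=
  fun x => ⨍ v in Metric.closedBall (0 : EuclideanSpace ℝ (Fin r)) 1, g (x + δ • v)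

section BallOverlap

variable {E : Type*} [NormedAddCommGroup E] [NormedSpace ℝ E] [FiniteDimensional ℝ E]
  [MeasurableSpace E] [BorelSpace E] (μ : Measure E) [μ.IsAddHaarMeasure]

/-- Two unit balls overlap in at least a `1 - d ‖a - b‖ / 2` proportion of their volume. -/
theorem one_sub_mul_measureReal_closedBall_le_inter [Nontrivial E] (a b : E) :
    (1 - Module.finrank ℝ E * (‖a - b‖ / 2)) * μ.real (Metric.closedBall 0 1) ≤
      μ.real (Metric.closedBall a 1 ∩ Metric.closedBall b 1) := by
  have hd : (1 : ℝ) ≤ Module.finrank ℝ E := by exact_mod_cast Module.finrank_pos (R := ℝ) (M := E)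
  rcases le_total (‖a - b‖ / 2) 1 with h | h
  · have hsub : Metric.closedBall (midpoint ℝ a b) (1 - ‖a - b‖ / 2) ⊆
        Metric.closedBall a 1 ∩ Metric.closedBall b 1 := by
      refine Set.subset_inter (Metric.closedBall_subset_closedBall' ?_)
        (Metric.closedBall_subset_closedBall' ?_)
      · rw [dist_midpoint_left, dist_eq_norm, Real.norm_ofNat]
        linarith
      · rw [dist_midpoint_right, dist_eq_norm, Real.norm_ofNat]
        linarith
    calc _ ≤ (1 - ‖a - b‖ / 2) ^ Module.finrank ℝ E * μ.real (Metric.closedBall 0 1) := by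
          gcongr
          have := one_add_mul_le_pow (a := -(‖a - b‖ / 2)) (by linarith) (Module.finrank ℝ E)
          rw [← sub_eq_add_neg] at this
          linarith
      _ = μ.real (Metric.closedBall (midpoint ℝ a b) (1 - ‖a - b‖ / 2)) :=
          (Measure.addHaar_real_closedBall' μ _ (by linarith)).symm
      _ ≤ _ := measureReal_mono hsub
          ((measure_mono Set.inter_subset_left).trans_lt measure_closedBall_lt_top).ne
  · refine (mul_nonpos_of_nonpos_of_nonneg ?_ measureReal_nonneg).trans measureReal_nonneg
    nlinarith

theorem measureReal_closedBall_diff_closedBall_le [Nontrivial E] (a b : E) :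
    μ.real (Metric.closedBall a 1 \ Metric.closedBall b 1) ≤
      Module.finrank ℝ E * (‖a - b‖ / 2) * μ.real (Metric.closedBall 0 1) := by
  have h := measureReal_inter_add_sdiff (μ := μ) (s := Metric.closedBall a 1)
    (Metric.isClosed_closedBall (x := b) (ε := 1)).measurableSet measure_closedBall_lt_top.ne
  rw [Measure.addHaar_real_closedBall_center] at h
  linarith [one_sub_mul_measureReal_closedBall_le_inter μ a b]

/-- The integral of a bounded function over a unit ball is Lipschitz in the centre. -/
theorem norm_setIntegral_closedBall_sub_le [Nontrivial E] {F : Type*} [NormedAddCommGroup F]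
    [NormedSpace ℝ F] {f : E → F} {C : ℝ} (hf : AEStronglyMeasurable f μ)
    (hC : ∀ v, ‖f v‖ ≤ C) (a b : E) :
    ‖(∫ v in Metric.closedBall a 1, f v ∂μ) - ∫ v in Metric.closedBall b 1, f v ∂μ‖ ≤
      C * (Module.finrank ℝ E * ‖a - b‖ * μ.real (Metric.closedBall 0 1)) := by
  have hC0 : 0 ≤ C := (norm_nonneg _).trans (hC 0)
  have hint (c : E) : IntegrableOn f (Metric.closedBall c 1) μ :=
    Measure.integrableOn_of_bounded measure_closedBall_lt_top.ne hf (.of_forall hC)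
  have hbound (c d : E) : ‖∫ v in Metric.closedBall c 1 \ Metric.closedBall d 1, f v ∂μ‖ ≤
      C * (Module.finrank ℝ E * (‖c - d‖ / 2) * μ.real (Metric.closedBall 0 1)) :=
    (norm_setIntegral_le_of_norm_le_const
      ((measure_mono Set.sdiff_subset).trans_lt measure_closedBall_lt_top) fun v _ => hC v).trans
      (mul_le_mul_of_nonneg_left (measureReal_closedBall_diff_closedBall_le μ c d) hC0)
  have hab := hbound a b
  have hba := hbound b a
  rw [norm_sub_rev b a] at hba
  rw [← integral_inter_add_sdiff (t := Metric.closedBall b 1)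
      Metric.isClosed_closedBall.measurableSet (hint a),
    ← integral_inter_add_sdiff (t := Metric.closedBall a 1)
      Metric.isClosed_closedBall.measurableSet (hint b),
    Set.inter_comm, add_sub_add_left_eq_sub]
  refine (norm_sub_le _ _).trans ((add_le_add hab hba).trans_eq ?_)
  ring

end BallOverlap

/-- By Rademacher's theorem, ball smoothing may be differentiated under the integral sign. -/
theorem hasFDerivAt_ballSmooth {r : ℕ} {δ : ℝ} (hδ : δ ≠ 0) {K : NNReal}
    {g : EuclideanSpace ℝ (Fin r) → ℝ} (hg : LipschitzWith K g) (x : EuclideanSpace ℝ (Fin r)) :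
    HasFDerivAt (ballSmooth δ g)
      (⨍ v in Metric.closedBall (0 : EuclideanSpace ℝ (Fin r)) 1, fderiv ℝ g (x + δ • v)) x := by
  have hcont (z : EuclideanSpace ℝ (Fin r)) : Continuous fun v => g (z + δ • v) :=
    hg.continuous.comp (by fun_prop)
  have hdiff : ∀ᵐ v : EuclideanSpace ℝ (Fin r), DifferentiableAt ℝ g (x + δ • v) :=
    ((measurePreserving_add_left volume x).quasiMeasurePreserving.comp
      (Measure.quasiMeasurePreserving_smul volume hδ)).ae hg.ae_differentiableAt
  have key := hasFDerivAt_integral_of_dominated_loc_of_lip (𝕜 := ℝ)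
    (μ := volume.restrict (Metric.closedBall (0 : EuclideanSpace ℝ (Fin r)) 1))
    (F := fun z v => g (z + δ • v)) (F' := fun v => fderiv ℝ g (x + δ • v)) (x₀ := x)
    (bound := fun _ => (K : ℝ)) Filter.univ_mem
    (.of_forall fun z => (hcont z).aestronglyMeasurable)
    ((hcont x).continuousOn.integrableOn_compact (isCompact_closedBall _ _))
    (((measurable_fderiv ℝ g).comp (by fun_prop)).aestronglyMeasurable)
    (.of_forall fun v => by
      refine LipschitzWith.lipschitzOnWith ?_
      simpa [Function.comp_def] using
        hg.comp (LipschitzWith.id.add (LipschitzWith.const (δ • v))))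
    (integrableOn_const measure_closedBall_lt_top.ne)
    (ae_restrict_of_ae (hdiff.mono fun v hv => (hasFDerivAt_comp_add_right (δ • v)).2 hv.hasFDerivAt))
  have hsmooth : ballSmooth δ g =
      (volume.real (Metric.closedBall (0 : EuclideanSpace ℝ (Fin r)) 1))⁻¹ •
        fun z => ∫ v in Metric.closedBall (0 : EuclideanSpace ℝ (Fin r)) 1, g (z + δ • v) :=
    funext fun z => setAverage_eq _ _ _
  rw [hsmooth, setAverage_eq]
  exact key.2.const_smul _

/-- The gradient of the ball smoothing of a `G`-Lipschitz function is `(rG/δ)`-Lipschitz. -/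
theorem stmt6 (r : ℕ) (G δ : ℝ) (hδ : 0 < δ)
    (g : EuclideanSpace ℝ (Fin r) → ℝ)
    (hg : ∀ x y, |g x - g y| ≤ G * ‖x - y‖) :
    ∀ x y, ‖gradient (ballSmooth δ g) x - gradient (ballSmooth δ g) y‖ ≤
      (r : ℝ) * G / δ * ‖x - y‖ := by
  intro x y
  rcases eq_or_ne x y with rfl | hxy
  · simp
  have : Nontrivial (EuclideanSpace ℝ (Fin r)) := ⟨x, y, hxy⟩
  have hG : 0 ≤ G :=
    nonneg_of_mul_nonneg_left ((abs_nonneg _).trans (hg x y)) (norm_sub_pos_iff.2 hxy)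
  lift G to NNReal using hG
  have hlip : LipschitzWith G g := LipschitzWith.of_dist_le_mul fun a b => by
    simpa [dist_eq_norm] using hg a b
  set w := δ⁻¹ • (y - x) with hw
  have hshift : ∫ v in Metric.closedBall (0 : EuclideanSpace ℝ (Fin r)) 1,
      fderiv ℝ g (y + δ • v) = ∫ v in Metric.closedBall w 1, fderiv ℝ g (x + δ • v) := by
    rw [← (measurePreserving_add_right volume w).setIntegral_preimage_emb
      (measurableEmbedding_addRight w) (fun v => fderiv ℝ g (x + δ • v))]
    have hpre : (fun v => v + w) ⁻¹' Metric.closedBall w 1 = Metric.closedBall 0 1 := by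
      ext v; simp
    rw [hpre]
    congr! 3 with v
    rw [smul_add, hw, smul_inv_smul₀ hδ.ne']
    abel
  have hV : 0 < volume.real (Metric.closedBall (0 : EuclideanSpace ℝ (Fin r)) 1) :=
    ENNReal.toReal_pos (Metric.measure_closedBall_pos _ _ one_pos).ne' measure_closedBall_lt_top.ne
  have hint := norm_setIntegral_closedBall_sub_le volume (C := G)
    (((measurable_fderiv ℝ g).comp
      (by fun_prop : Measurable fun v => x + δ • v)).aestronglyMeasurable)
    (fun v => norm_fderiv_le_of_lipschitz ℝ hlip) 0 w
  simp only [Function.comp_apply] at hint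
  rw [gradient, gradient, ← map_sub, LinearIsometryEquiv.norm_map,
    (hasFDerivAt_ballSmooth hδ.ne' hlip x).fderiv, (hasFDerivAt_ballSmooth hδ.ne' hlip y).fderiv,
    setAverage_eq, setAverage_eq, ← smul_sub, hshift, norm_smul, norm_inv,
    Real.norm_of_nonneg hV.le, inv_mul_le_iff₀ hV]
  refine hint.trans_eq ?_
  rw [finrank_euclideanSpace_fin, zero_sub, norm_neg, hw, norm_smul, norm_inv,
    Real.norm_of_nonneg hδ.le, norm_sub_rev y x]
  field_simp
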